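/- The series identity ∑_{n≥1} (−1/4)^n · (1)_n / ((1/2)_n) · [ (10n−3) H_n^{(2)} / (3 n² (2n−1)) − (18n−7)/(3 n⁴ (2n−1)) ] = π⁴/135 holds. -/

import Mathlib

/-- The rising factorial (Pochhammer symbol) `(a)ₙ = a(a+1)⋯(a+n-1)`. -/
noncomputable def risingFactorial (a : ℝ) (n : ℕ) : ℝ :=
  ∏ i ∈ Finset.range n, (a + i)

/-- The generalized harmonic number `H_n^{(s)} = ∑_{k=1}^n 1/k^s`. -/
noncomputable def genHarmonic (s n : ℕ) : ℝ :=
  ∑ k ∈ Finset.range n, 1 / ((k : ℝ) + 1) ^ s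

/-!
Write `P n = ∏_{i=1}^n (X - i²)`. The expansion of `1 / (u² - X)` in the Newton basis,
`1 / (u² - X) = ∑_{m<n} P m / (P (m+1))(u²) + P n / ((P n)(u²) (u² - X))`, is valid for `u > n`.
Summing over `u ≥ 1` and expanding `1 / (u² - X)` for as many steps as `u` allows turns
`∑ 1 / (u² - X)` into a single sum over `n`: the remainder at `u = n + 1`, plus `P n` times the
tail `∑_{u ≥ n+2} 1 / (P (n+1))(u²)`, which telescopes. The coefficient of `X^s` is a rapidly
convergent series for `ζ(2s+2)`; the theorem is the case `s = 1`.
-/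

open Filter Function Topology
open Finset (range sum_range_succ sum_range_sub' prod_range_succ)
open Lagrange (nodal)
open scoped Nat Polynomial PowerSeries

namespace NewtonZeta

section Telescoping

variable {E : Type*} [AddCommGroup E]

theorem hasSum_sub_succ [TopologicalSpace E] [IsTopologicalAddGroup E] {a : ℕ → E}
    (ha : Summable a) : HasSum (fun n => a n - a (n + 1)) (a 0) := by
  simpa using ha.hasSum.sub ((hasSum_nat_add_iff' 1).2 ha.hasSum)

variable [UniformSpace E] [IsUniformAddGroup E] [CompleteSpace E] [T2Space E]

theorem hasSum_of_markov_wilf_zeilberger_pair {f g : ℕ → ℕ → E} (hf : Summable (uncurry f))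
    (hg : ∀ n, Tendsto (g n) atTop (𝓝 0))
    (hfg : ∀ n k, f n (k + 1) - f (n + 1) k = g n k - g n (k + 1)) :
    HasSum (fun n => f n 0 + g n 0) (∑' k, f 0 k) := by
  have hrow (n : ℕ) : Summable (f n) := hf.prod_factor n
  have hstep (n : ℕ) : ∑' k, f n k - ∑' k, f (n + 1) k = f n 0 + g n 0 := by
    have hsum : HasSum (fun k => g n k - g n (k + 1))
        (∑' k, f n (k + 1) - ∑' k, f (n + 1) k) := by
      simp only [← hfg]
      exact ((summable_nat_add_iff 1).2 (hrow n)).hasSum.sub (hrow (n + 1)).hasSum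
    have hlim : Tendsto (fun m => ∑ k ∈ range m, (g n k - g n (k + 1))) atTop (𝓝 (g n 0)) := by
      simpa only [sum_range_sub', sub_zero] using (hg n).const_sub (g n 0)
    rw [(hrow n).tsum_eq_zero_add, ← tendsto_nhds_unique hsum.tendsto_sum_nat hlim]
    abel
  have hsums : Summable fun n => ∑' k, f n k := hf.prod
  simpa only [hstep] using hasSum_sub_succ hsums

end Telescoping

section Newton

variable {R : Type*} [CommRing R]

theorem nodal_range_succ (v : ℕ → R) (n : ℕ) :
    nodal (range (n + 1)) v = nodal (range n) v * (Polynomial.X - Polynomial.C (v n)) :=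
  prod_range_succ _ n

theorem coeff_zero_nodal {ι : Type*} (s : Finset ι) (v : ι → R) :
    (nodal s v).coeff 0 = ∏ i ∈ s, -v i := by
  simp [Polynomial.coeff_zero_eq_eval_zero, Lagrange.eval_nodal]

theorem constantCoeff_C_sub_X (y : R) :
    PowerSeries.constantCoeff (PowerSeries.C y - PowerSeries.X) = y := by
  simp

variable {K : Type*} [Field K]

theorem coeff_one_nodal {ι : Type*} {s : Finset ι} {v : ι → K} (hv : ∀ i ∈ s, v i ≠ 0) :
    (nodal s v).coeff 1 = -(∏ i ∈ s, -v i) * ∑ i ∈ s, (v i)⁻¹ := by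
  classical
  induction s using Finset.induction_on with
  | empty => simp [Polynomial.coeff_one]
  | insert i s hi ih =>
    obtain ⟨hvi, hvs⟩ := Finset.forall_mem_insert _ _ _ |>.1 hv
    rw [Lagrange.nodal_insert_eq_nodal hi, sub_mul, Polynomial.coeff_sub, Polynomial.coeff_C_mul,
      Polynomial.coeff_X_mul, coeff_zero_nodal, ih hvs, Finset.prod_insert hi,
      Finset.sum_insert hi]
    field_simp
    ring

theorem coeff_inv_C_sub_X {y : K} (hy : y ≠ 0) (s : ℕ) :
    PowerSeries.coeff s (PowerSeries.C y - PowerSeries.X)⁻¹ = (y ^ (s + 1))⁻¹ := by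
  have hinv : (PowerSeries.C y - PowerSeries.X)⁻¹ =
      PowerSeries.invUnitsSub (Units.mk0 y hy) :=
    ((PowerSeries.eq_inv_iff_mul_eq_one ((constantCoeff_C_sub_X y).trans_ne hy)).2
      (PowerSeries.invUnitsSub_mul_sub (Units.mk0 y hy))).symm
  simp [hinv, PowerSeries.coeff_invUnitsSub, divp]

/-- The remainder `P n / ((P n)(y) (y - X))`, where `P n = ∏_{i<n} (X - v i)`, left after `n` steps
of the Newton expansion of `1 / (y - X)` at the nodes `v 0, v 1, …`, as a power series in `X`.
It is `0` by convention if `y` is `0` or one of `v 0, …, v (n - 1)`. -/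
noncomputable def newtonRemainder (v : ℕ → K) (n : ℕ) (y : K) : K⟦X⟧ :=
  ((nodal (range n) v).eval y)⁻¹ •
    ((nodal (range n) v : K⟦X⟧) * (PowerSeries.C y - PowerSeries.X)⁻¹)

theorem newtonRemainder_zero (v : ℕ → K) (y : K) :
    newtonRemainder v 0 y = (PowerSeries.C y - PowerSeries.X)⁻¹ := by
  simp [newtonRemainder]

theorem newtonRemainder_sub_newtonRemainder_succ (v : ℕ → K) {n : ℕ} {y : K} (hy : y ≠ 0)
    (hyn : y ≠ v n) :
    newtonRemainder v n y - newtonRemainder v (n + 1) y =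
      ((nodal (range (n + 1)) v).eval y)⁻¹ • (nodal (range n) v : K⟦X⟧) := by
  have hC : (PowerSeries.C y - PowerSeries.X) * (PowerSeries.C y - PowerSeries.X)⁻¹ = 1 :=
    PowerSeries.mul_inv_cancel _ ((constantCoeff_C_sub_X y).trans_ne hy)
  have hinv : ((nodal (range n) v).eval y)⁻¹ =
      ((nodal (range (n + 1)) v).eval y)⁻¹ * (y - v n) := by
    simp [nodal_range_succ, mul_comm, sub_ne_zero.2 hyn]
  simp only [newtonRemainder]
  rw [hinv, mul_smul, ← smul_sub]
  congr 1
  rw [nodal_range_succ, Polynomial.coe_mul, Polynomial.coe_sub, Polynomial.coe_X,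
    Polynomial.coe_C, PowerSeries.smul_eq_C_mul, map_sub]
  linear_combination (nodal (range n) v : K⟦X⟧) * hC

theorem coeff_one_newtonRemainder {v : ℕ → K} {n : ℕ} {y : K} (hv : ∀ i ∈ range n, v i ≠ 0)
    (hy : y ≠ 0) :
    PowerSeries.coeff 1 (newtonRemainder v n y) =
      ((nodal (range n) v).eval y)⁻¹ * (∏ i ∈ range n, -v i) *
        (1 / y ^ 2 - (∑ i ∈ range n, (v i)⁻¹) / y) := by
  rw [newtonRemainder, PowerSeries.coeff_smul, PowerSeries.coeff_mul,
    Finset.Nat.sum_antidiagonal_eq_sum_range_succ_mk]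
  simp only [sum_range_succ, Finset.sum_range_zero, Polynomial.coeff_coe, coeff_inv_C_sub_X hy,
    coeff_zero_nodal, coeff_one_nodal hv, smul_eq_mul, tsub_zero, tsub_self]
  ring

end Newton

section Bounds

theorem norm_coeff_X_sub_C_mul_le {R : Type*} [SeminormedCommRing R] {f : R⟦X⟧} {M : ℝ}
    (hf : ∀ s, ‖PowerSeries.coeff s f‖ ≤ M) (c : R) (s : ℕ) :
    ‖PowerSeries.coeff s ((PowerSeries.X - PowerSeries.C c) * f)‖ ≤ (1 + ‖c‖) * M := by
  have hM : 0 ≤ M := (norm_nonneg _).trans (hf 0)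
  have hX : ‖PowerSeries.coeff s (PowerSeries.X * f)‖ ≤ M := by
    cases s with
    | zero => simpa using hM
    | succ s => simpa only [PowerSeries.coeff_succ_X_mul] using hf s
  have hc : ‖PowerSeries.coeff s (PowerSeries.C c * f)‖ ≤ ‖c‖ * M := by
    rw [PowerSeries.coeff_C_mul]
    exact (norm_mul_le _ _).trans (by gcongr; exact hf s)
  rw [sub_mul, map_sub]
  linarith [norm_sub_le (PowerSeries.coeff s (PowerSeries.X * f))
    (PowerSeries.coeff s (PowerSeries.C c * f))]

theorem norm_coeff_nodal_mul_le {ι R : Type*} [SeminormedCommRing R] {f : R⟦X⟧} {M : ℝ}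
    (hf : ∀ s, ‖PowerSeries.coeff s f‖ ≤ M) (t : Finset ι) (v : ι → R) (s : ℕ) :
    ‖PowerSeries.coeff s ((nodal t v : R⟦X⟧) * f)‖ ≤ (∏ i ∈ t, (1 + ‖v i‖)) * M := by
  classical
  induction t using Finset.induction_on generalizing s with
  | empty => simpa using hf s
  | insert i t hi ih =>
    rw [Lagrange.nodal_insert_eq_nodal hi, Polynomial.coe_mul, Polynomial.coe_sub,
      Polynomial.coe_X, Polynomial.coe_C, mul_assoc, Finset.prod_insert hi, mul_assoc]
    exact norm_coeff_X_sub_C_mul_le ih (v i) s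

theorem norm_coeff_newtonRemainder_le {K : Type*} [NormedField K] (v : ℕ → K) (n s : ℕ) {y : K}
    (hy : 1 ≤ ‖y‖) :
    ‖PowerSeries.coeff s (newtonRemainder v n y)‖ ≤
      ‖((nodal (range n) v).eval y)⁻¹‖ * ((∏ i ∈ range n, (1 + ‖v i‖)) * ‖y‖⁻¹) := by
  have hy₀ : y ≠ 0 := norm_pos_iff.1 (zero_lt_one.trans_le hy)
  have hG (j : ℕ) : ‖PowerSeries.coeff j (PowerSeries.C y - PowerSeries.X)⁻¹‖ ≤ ‖y‖⁻¹ := by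
    rw [coeff_inv_C_sub_X hy₀, norm_inv, norm_pow]
    gcongr
    exact le_self_pow₀ hy j.succ_ne_zero
  rw [newtonRemainder, PowerSeries.coeff_smul, smul_eq_mul, norm_mul]
  gcongr
  exact norm_coeff_nodal_mul_le hG (range n) v s

end Bounds

section Squares

/-- The nodes `1, 4, 9, …` of the Newton expansion, indexed from `0`. -/
def squareNode (i : ℕ) : ℝ := ((i : ℝ) + 1) ^ 2

theorem squareNode_pos (i : ℕ) : 0 < squareNode i := by
  unfold squareNode
  positivity

theorem prod_neg_squareNode (n : ℕ) :
    ∏ i ∈ range n, -squareNode i = (-1) ^ n * (n ! : ℝ) ^ 2 := by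
  simp only [squareNode, Finset.prod_neg, Finset.card_range, Finset.prod_pow,
    ← Finset.prod_range_add_one_eq_factorial]
  push_cast
  rfl

theorem sum_inv_squareNode (n : ℕ) : ∑ i ∈ range n, (squareNode i)⁻¹ = genHarmonic 2 n := by
  simp [squareNode, genHarmonic]

theorem prod_one_add_norm_squareNode_le (n : ℕ) :
    ∏ i ∈ range n, (1 + ‖squareNode i‖) ≤ n ! * (n + 1)! := by
  induction n with
  | zero => simp
  | succ n ih =>
    have hstep : 1 + ‖squareNode n‖ ≤ ((n : ℝ) + 1) * (n + 2) := by
      rw [Real.norm_of_nonneg (squareNode_pos n).le, squareNode]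
      nlinarith [(n.cast_nonneg : (0 : ℝ) ≤ n)]
    calc ∏ i ∈ range (n + 1), (1 + ‖squareNode i‖)
        ≤ (n ! * (n + 1)!) * (((n : ℝ) + 1) * (n + 2)) := by
          rw [prod_range_succ]
          gcongr
      _ = (n + 1)! * (n + 1 + 1)! := by
          rw [Nat.factorial_succ (n + 1), Nat.factorial_succ n]
          push_cast
          ring

theorem eval_nodal_squareNode (n k : ℕ) :
    (nodal (range n) squareNode).eval (squareNode (n + k)) =
      (2 * n + k + 1)! / ((n + k + 1) * k !) := by
  induction n generalizing k with
  | zero =>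
    have : (k ! : ℝ) ≠ 0 := by positivity
    simp only [Finset.range_zero, Lagrange.nodal_empty, Polynomial.eval_one, mul_zero, zero_add,
      Nat.factorial_succ]
    push_cast
    field_simp
    ring
  | succ n ih =>
    rw [nodal_range_succ, Polynomial.eval_mul, Nat.add_right_comm n 1 k, Nat.add_assoc n k 1, ih,
      show 2 * (n + 1) + k + 1 = 2 * n + (k + 1) + 1 + 1 by ring,
      Nat.factorial_succ (2 * n + (k + 1) + 1), Nat.factorial_succ k]
    simp only [squareNode, Polynomial.eval_sub, Polynomial.eval_X, Polynomial.eval_C]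
    push_cast
    field_simp
    ring

/-- The tail `∑_{u ≥ n + k + 2} ∏_{i=1}^{n+1} 1 / (u² - i²)` in closed form: the total
weight of the `n`-th Newton basis polynomial in the expansions of `1 / (u² - X)` for these `u`. -/
noncomputable def nodalTail (n k : ℕ) : ℝ :=
  k ! * (2 * n + 2 * k + 3) / (2 * (2 * n + 1) * (2 * n + k + 2)!)

theorem nodalTail_sub_nodalTail_succ (n k : ℕ) :
    nodalTail n k - nodalTail n (k + 1) =
      ((nodal (range (n + 1)) squareNode).eval (squareNode (n + 1 + k)))⁻¹ := by
  rw [eval_nodal_squareNode, nodalTail, nodalTail,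
    show 2 * (n + 1) + k + 1 = 2 * n + k + 2 + 1 by ring,
    show 2 * n + (k + 1) + 2 = 2 * n + k + 2 + 1 by ring,
    Nat.factorial_succ (2 * n + k + 2), Nat.factorial_succ k]
  push_cast
  field_simp
  ring

theorem nodalTail_le (n k : ℕ) : nodalTail n k ≤ 1 / ((k : ℝ) + 1) := by
  have hfact : ((k : ℝ) + 2) * (k + 1) * k ! ≤ (2 * n + k + 2)! := by
    have h := Nat.factorial_le (show k + 2 ≤ 2 * n + k + 2 by lia)
    rw [Nat.factorial_succ, Nat.factorial_succ, ← mul_assoc] at h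
    exact_mod_cast h
  have hlin : 2 * (n : ℝ) + 2 * k + 3 ≤ 2 * (2 * n + 1) * (k + 2) := by
    nlinarith [mul_nonneg (n.cast_nonneg : (0 : ℝ) ≤ n) (k.cast_nonneg : (0 : ℝ) ≤ k),
      (n.cast_nonneg : (0 : ℝ) ≤ n)]
  calc nodalTail n k
      ≤ k ! * (2 * (2 * n + 1) * (k + 2)) / (2 * (2 * n + 1) * ((k + 2) * (k + 1) * k !)) := by
        unfold nodalTail
        gcongr
    _ = 1 / ((k : ℝ) + 1) := by field_simp

theorem tendsto_nodalTail (n : ℕ) : Tendsto (nodalTail n) atTop (𝓝 0) :=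
  squeeze_zero (fun k => by unfold nodalTail; positivity) (nodalTail_le n)
    tendsto_one_div_add_atTop_nhds_zero_nat

theorem two_pow_mul_factorial_mul_factorial_le (n k : ℕ) :
    2 ^ n * (n ! * (n + 1)! * (k + 1)!) ≤ (2 * n + k + 1)! := by
  induction n with
  | zero => simp
  | succ n ih =>
    calc 2 ^ (n + 1) * ((n + 1)! * (n + 1 + 1)! * (k + 1)!)
        = 2 * (n + 1) * (n + 2) * (2 ^ n * (n ! * (n + 1)! * (k + 1)!)) := by
          rw [Nat.factorial_succ (n + 1), Nat.factorial_succ n]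
          ring
      _ ≤ (2 * n + k + 3) * (2 * n + k + 2) * (2 * n + k + 1)! :=
          Nat.mul_le_mul (by nlinarith) ih
      _ = (2 * (n + 1) + k + 1)! := by
          rw [show 2 * (n + 1) + k + 1 = 2 * n + k + 1 + 1 + 1 by ring,
            Nat.factorial_succ (2 * n + k + 1 + 1), Nat.factorial_succ (2 * n + k + 1)]
          ring

theorem norm_coeff_newtonRemainder_squareNode_le (s n k : ℕ) :
    ‖PowerSeries.coeff s (newtonRemainder squareNode n (squareNode (n + k)))‖ ≤
      (1 / 2 : ℝ) ^ n * (1 / ((k : ℝ) + 1) ^ 2) := by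
  have hnorm : ‖squareNode (n + k)‖ = ((n : ℝ) + k + 1) ^ 2 := by
    rw [Real.norm_of_nonneg (squareNode_pos _).le, squareNode, Nat.cast_add]
  have hone : 1 ≤ ‖squareNode (n + k)‖ := by
    rw [hnorm]
    exact one_le_pow₀ (by linarith [(n.cast_nonneg : (0 : ℝ) ≤ n), (k.cast_nonneg : (0 : ℝ) ≤ k)])
  have hfact : (n ! * (n + 1)! * (k + 1)! : ℝ) / (2 * n + k + 1)! ≤ (1 / 2) ^ n := by
    rw [div_le_iff₀ (by positivity), one_div, inv_pow, inv_mul_eq_div,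
      le_div_iff₀' (by positivity)]
    exact_mod_cast two_pow_mul_factorial_mul_factorial_le n k
  calc _ ≤ _ := norm_coeff_newtonRemainder_le squareNode n s hone
    _ ≤ ((n + k + 1) * k ! / (2 * n + k + 1)!) *
          ((n ! * (n + 1)!) * (((n : ℝ) + k + 1) ^ 2)⁻¹) := by
        rw [eval_nodal_squareNode, inv_div, Real.norm_of_nonneg (by positivity), hnorm]
        gcongr
        exact prod_one_add_norm_squareNode_le n
    _ = (n ! * (n + 1)! * (k + 1)!) / (2 * n + k + 1)! *
          (1 / (((k : ℝ) + 1) * (n + k + 1))) := by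
        rw [Nat.factorial_succ k]
        push_cast
        field_simp
    _ ≤ (1 / 2) ^ n * (1 / (((k : ℝ) + 1) * (k + 1))) := by
        gcongr
        linarith [(n.cast_nonneg : (0 : ℝ) ≤ n)]
    _ = _ := by rw [sq]

theorem summable_coeff_newtonRemainder_squareNode (s : ℕ) :
    Summable (uncurry fun n k : ℕ =>
      PowerSeries.coeff s (newtonRemainder squareNode n (squareNode (n + k)))) := by
  have hsq : Summable fun k : ℕ => 1 / ((k : ℝ) + 1) ^ 2 := by
    simpa using (summable_nat_add_iff 1).2 (Real.summable_one_div_nat_pow.2 one_lt_two)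
  exact .of_norm_bounded
    (summable_geometric_two.mul_of_nonneg hsq (fun _ => by positivity) fun _ => by positivity)
    fun p => norm_coeff_newtonRemainder_squareNode_le s p.1 p.2

theorem hasSum_newton_zeta_even (s : ℕ) :
    HasSum (fun n : ℕ => PowerSeries.coeff s (newtonRemainder squareNode n (squareNode n)) +
        (nodal (range n) squareNode).coeff s * nodalTail n 0)
      (∑' k : ℕ, 1 / ((k : ℝ) + 1) ^ (2 * s + 2)) := by
  have hstep (n k : ℕ) :
      PowerSeries.coeff s (newtonRemainder squareNode n (squareNode (n + (k + 1)))) -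
          PowerSeries.coeff s (newtonRemainder squareNode (n + 1) (squareNode (n + 1 + k))) =
        (nodal (range n) squareNode).coeff s * nodalTail n k -
          (nodal (range n) squareNode).coeff s * nodalTail n (k + 1) := by
    have hne : squareNode (n + 1 + k) ≠ squareNode n := by
      refine ne_of_gt ?_
      unfold squareNode
      gcongr
      lia
    rw [← mul_sub, nodalTail_sub_nodalTail_succ, show n + (k + 1) = n + 1 + k by ring, ← map_sub,
      newtonRemainder_sub_newtonRemainder_succ squareNode (squareNode_pos _).ne' hne,
      PowerSeries.coeff_smul, Polynomial.coeff_coe, smul_eq_mul, mul_comm]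
  have hzero (k : ℕ) : PowerSeries.coeff s (newtonRemainder squareNode 0 (squareNode (0 + k))) =
      1 / ((k : ℝ) + 1) ^ (2 * s + 2) := by
    rw [newtonRemainder_zero, coeff_inv_C_sub_X (squareNode_pos _).ne', zero_add, squareNode,
      ← pow_mul, one_div, mul_add_one]
  simpa only [hzero, add_zero] using
    hasSum_of_markov_wilf_zeilberger_pair (summable_coeff_newtonRemainder_squareNode s)
      (fun n => by simpa using (tendsto_nodalTail n).const_mul _) hstep

end Squares

section ZetaFour

theorem risingFactorial_one (n : ℕ) : risingFactorial 1 n = n ! := by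
  rw [risingFactorial, ← Finset.prod_range_add_one_eq_factorial]
  push_cast
  simp only [add_comm]

theorem risingFactorial_half (n : ℕ) :
    risingFactorial (1 / 2) n = (2 * n)! / (4 ^ n * n !) := by
  induction n with
  | zero => simp [risingFactorial]
  | succ n ih =>
    rw [risingFactorial, prod_range_succ, ← risingFactorial, ih,
      show 2 * (n + 1) = 2 * n + 1 + 1 by ring, Nat.factorial_succ, Nat.factorial_succ,
      Nat.factorial_succ]
    push_cast
    field_simp
    ring

theorem neg_quarter_pow_mul_risingFactorial_div (n : ℕ) :
    (-1 / 4 : ℝ) ^ n * risingFactorial 1 n / risingFactorial (1 / 2) n =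
      (-1) ^ n * (n ! : ℝ) ^ 2 / (2 * n)! := by
  rw [risingFactorial_one, risingFactorial_half, div_pow]
  field_simp

theorem genHarmonic_succ (s n : ℕ) :
    genHarmonic s (n + 1) = genHarmonic s n + 1 / ((n : ℝ) + 1) ^ s :=
  sum_range_succ _ n

theorem tsum_one_div_succ_pow_four : ∑' k : ℕ, 1 / ((k : ℝ) + 1) ^ 4 = Real.pi ^ 4 / 90 := by
  simpa using ((hasSum_nat_add_iff' 1).2 hasSum_zeta_four).tsum_eq

theorem coeff_one_newton_zeta_summand (n : ℕ) :
    PowerSeries.coeff 1 (newtonRemainder squareNode n (squareNode n)) +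
        (nodal (range n) squareNode).coeff 1 * nodalTail n 0 =
      (-1) ^ n * (n ! : ℝ) ^ 2 / (2 * n + 1)! *
        (1 / ((n : ℝ) + 1) ^ 3 -
          (10 * n + 7) * genHarmonic 2 n / (4 * (2 * n + 1) * (n + 1))) := by
  have hv : ∀ i ∈ range n, squareNode i ≠ 0 := fun i _ => (squareNode_pos i).ne'
  have heval := eval_nodal_squareNode n 0
  rw [add_zero] at heval
  rw [coeff_one_newtonRemainder hv (squareNode_pos n).ne', coeff_one_nodal hv, heval,
    prod_neg_squareNode, sum_inv_squareNode, squareNode, nodalTail, Nat.factorial_succ (2 * n + 1)]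
  push_cast
  rw [Nat.factorial_zero]
  field_simp
  ring

theorem hasSum_newton_zeta_four :
    HasSum (fun n : ℕ => (-1) ^ n * (n ! : ℝ) ^ 2 / (2 * n + 1)! *
        (1 / ((n : ℝ) + 1) ^ 3 -
          (10 * n + 7) * genHarmonic 2 n / (4 * (2 * n + 1) * (n + 1))))
      (Real.pi ^ 4 / 90) := by
  simpa only [coeff_one_newton_zeta_summand, mul_one, Nat.reduceAdd, tsum_one_div_succ_pow_four]
    using hasSum_newton_zeta_even 1

end ZetaFour

end NewtonZeta

open NewtonZeta in
/-- `∑_{n≥1} (−1/4)^n (1)ₙ/(1/2)ₙ [ (10n−3)H_n^{(2)}/(3n²(2n−1)) − (18n−7)/(3n⁴(2n−1)) ]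
    = π⁴/135`. -/
theorem harmonic2_pi4_135_series :
    ∑' n : ℕ, ((-1 / 4 : ℝ) ^ (n + 1) * risingFactorial 1 (n + 1) /
        risingFactorial (1 / 2) (n + 1) *
        ((10 * ((n : ℝ) + 1) - 3) * genHarmonic 2 (n + 1) /
            (3 * ((n : ℝ) + 1) ^ 2 * (2 * ((n : ℝ) + 1) - 1)) -
          (18 * ((n : ℝ) + 1) - 7) / (3 * ((n : ℝ) + 1) ^ 4 * (2 * ((n : ℝ) + 1) - 1))))
      = Real.pi ^ 4 / 135 := by
  rw [show Real.pi ^ 4 / 135 = 2 / 3 * (Real.pi ^ 4 / 90) by ring,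
    ← (hasSum_newton_zeta_four.mul_left (2 / 3)).tsum_eq]
  refine tsum_congr fun n => ?_
  rw [neg_quarter_pow_mul_risingFactorial_div, genHarmonic_succ,
    show 2 * ((n : ℝ) + 1) - 1 = 2 * n + 1 by ring, show 2 * (n + 1) = 2 * n + 1 + 1 by ring,
    Nat.factorial_succ (2 * n + 1), Nat.factorial_succ n]
  push_cast
  field_simp
  ring
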